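/- Let A be a reduced commutative Noetherian ring and let V be an A-module. The following are equivalent: (1) every associated prime of V is a minimal prime of A; (2) the natural map V → V ⊗_A K(A) is injective, where K(A) is the product of the residue fields of the minimal primes of A; (3) the natural map from V to the product over minimal primes a of A of the maximal A/a-torsion-free quotients of V/aV is injective. -/

import Mathlib

open TensorProduct

/-!
All three conditions say that the intersection, over the minimal primes `a`, of the
`(A \ a)`-torsion submodules of `V` is zero. A nonzero element of this intersection has an
annihilator contained in no minimal prime, hence an associated prime above that annihilator
which is not minimal; conversely an element whose annihilator is a non-minimal prime lies in the
intersection. When `A` is reduced, each local ring `A_a` is a field, hence equal to `κ(a)`, so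
`V → κ(a) ⊗ V` is the localization at `a` and its kernel is the `(A \ a)`-torsion. Likewise `aV`
consists of `(A \ a)`-torsion elements, so the `A/a`-torsion of `V/aV` pulls back to the same
submodule.
-/

section Torsion

variable {R M : Type*} [CommRing R] [AddCommGroup M] [Module R M]

theorem ker_eq_torsion'_of_isLocalizedModule {M' : Type*} [AddCommGroup M'] [Module R M']
    (S : Submonoid R) (f : M →ₗ[R] M') [IsLocalizedModule S f] :
    LinearMap.ker f = Submodule.torsion' R M S :=
  Submodule.ext fun _ => IsLocalizedModule.eq_zero_iff S f

theorem smul_top_le_torsion' {S : Submonoid R} {I : Ideal R}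
    (hI : I ≤ Submodule.torsion' R R S) :
    I • (⊤ : Submodule R M) ≤ Submodule.torsion' R M S := by
  refine Submodule.smul_le.2 fun r hr m _ => ?_
  obtain ⟨s, hs⟩ := hI hr
  exact ⟨s, by rw [← smul_assoc, hs, zero_smul]⟩

theorem comap_mkQ_torsion' {S : Submonoid R} {N : Submodule R M}
    (hN : N ≤ Submodule.torsion' R M S) :
    (Submodule.torsion' R (M ⧸ N) S).comap N.mkQ = Submodule.torsion' R M S := by
  refine le_antisymm ?_ ?_
  · rintro m ⟨s, hs⟩
    obtain ⟨t, ht⟩ := hN ((Submodule.Quotient.mk_eq_zero N (x := s • m)).1 hs)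
    exact ⟨t * s, by rw [mul_smul, ht]⟩
  · rintro m ⟨s, hs⟩
    exact ⟨s, (Submodule.Quotient.mk_eq_zero N (x := s • m)).2 (hs ▸ N.zero_mem)⟩

theorem restrictScalars_torsion_quotient_eq_torsion' (p : Ideal R) [p.IsPrime] [Module (R ⧸ p) M]
    [IsScalarTower R (R ⧸ p) M] :
    (Submodule.torsion (R ⧸ p) M).restrictScalars R = Submodule.torsion' R M p.primeCompl := by
  refine le_antisymm ?_ ?_
  · rintro m ⟨⟨s, hs⟩, hsm⟩
    obtain ⟨s, rfl⟩ := Ideal.Quotient.mk_surjective s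
    have hsp : s ∉ p := mt Ideal.Quotient.eq_zero_iff_mem.2 (nonZeroDivisors.ne_zero hs)
    exact ⟨⟨s, hsp⟩, (algebraMap_smul (R ⧸ p) s m).symm.trans hsm⟩
  · rintro m ⟨⟨s, hsp⟩, hsm⟩
    have hs : Ideal.Quotient.mk p s ≠ 0 := mt Ideal.Quotient.eq_zero_iff_mem.1 hsp
    exact ⟨⟨_, mem_nonZeroDivisors_of_ne_zero hs⟩, (algebraMap_smul (R ⧸ p) s m).trans hsm⟩

theorem iInf_torsion'_primeCompl_eq_bot_iff [IsNoetherianRing R] {ι : Type*} (p : ι → Ideal R)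
    [∀ i, (p i).IsPrime] :
    ⨅ i, Submodule.torsion' R M (p i).primeCompl = ⊥ ↔
      ∀ q ∈ associatedPrimes R M, ∃ i, q ≤ p i := by
  refine ⟨fun h q hq => ?_, fun h => (Submodule.eq_bot_iff _).2 fun m hm => ?_⟩
  · obtain ⟨hqp, m, rfl⟩ := isAssociatedPrime_iff.1 hq
    by_contra! hle
    have hm : m ∈ ⨅ i, Submodule.torsion' R M (p i).primeCompl := by
      refine (Submodule.mem_iInf _).2 fun i => ?_
      obtain ⟨s, hsm, hsp⟩ := SetLike.not_le_iff_exists.1 (hle i)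
      exact ⟨⟨s, hsp⟩, Submodule.mem_colon_singleton.1 hsm⟩
    rw [h, Submodule.mem_bot] at hm
    exact hqp.ne_top (by simp [hm])
  · by_contra hm0
    obtain ⟨q, hq, hmq⟩ := exists_le_isAssociatedPrime_of_isNoetherianRing R m hm0
    obtain ⟨i, hqi⟩ := h q hq
    obtain ⟨s, hsm⟩ := (Submodule.mem_iInf _).1 hm i
    exact s.2 (hqi (hmq (Submodule.mem_colon_singleton.2 hsm)))

instance isPrime_coe_minimalPrimes (a : minimalPrimes R) : a.1.IsPrime :=
  a.2.1.1

theorem iInf_torsion'_minimalPrimes_eq_bot_iff [IsNoetherianRing R] :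
    ⨅ a : minimalPrimes R, Submodule.torsion' R M a.1.primeCompl = ⊥ ↔
      associatedPrimes R M ⊆ minimalPrimes R := by
  rw [iInf_torsion'_primeCompl_eq_bot_iff]
  refine forall₂_congr fun q hq => ⟨fun ⟨a, hqa⟩ => ?_, fun h => ⟨⟨q, h⟩, le_rfl⟩⟩
  have : q = a.1 := le_antisymm hqa (a.2.2 ⟨hq.isPrime, bot_le⟩ hqa)
  exact this ▸ a.2

end Torsion

section FieldStalk

variable {A : Type*} [CommRing A] {a : Ideal A} [a.IsPrime]

theorem isField_localization_of_mem_minimalPrimes [IsReduced (Localization.AtPrime a)]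
    (ha : a ∈ minimalPrimes A) : IsField (Localization.AtPrime a) :=
  have := Ring.KrullDimLE.of_isLocalization a ha (Localization.AtPrime a)
  Ring.KrullDimLE.isField_of_isReduced

theorem le_torsion'_primeCompl_of_isField (h : IsField (Localization.AtPrime a)) :
    a ≤ Submodule.torsion' A A a.primeCompl := by
  intro x hx
  have hmax : algebraMap A (Localization.AtPrime a) x ∈ IsLocalRing.maximalIdeal _ :=
    (IsLocalization.AtPrime.to_map_mem_maximal_iff _ a x).2 hx
  rw [IsLocalRing.isField_iff_maximalIdeal_eq.1 h, Ideal.mem_bot] at hmax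
  exact (IsLocalization.map_eq_zero_iff a.primeCompl _ x).1 hmax

theorem isLocalization_atPrime_of_isFractionRing_quotient (h : IsField (Localization.AtPrime a))
    (K : Type*) [CommRing K] [Algebra A K] [Algebra (A ⧸ a) K] [IsScalarTower A (A ⧸ a) K]
    [IsFractionRing (A ⧸ a) K] : IsLocalization.AtPrime K a := by
  have residue_injective : Function.Injective (IsLocalRing.residue (Localization.AtPrime a)) := by
    rw [RingHom.injective_iff_ker_eq_bot, IsLocalRing.ker_residue]
    exact IsLocalRing.isField_iff_maximalIdeal_eq.1 h
  let localizationEquiv : Localization.AtPrime a ≃ₐ[A] a.ResidueField :=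
    AlgEquiv.ofBijective (IsScalarTower.toAlgHom A _ _)
      ⟨residue_injective, IsLocalRing.residue_surjective⟩
  let residueFieldEquiv : a.ResidueField ≃ₐ[A] K :=
    (IsLocalization.algEquiv (nonZeroDivisors (A ⧸ a)) a.ResidueField K).restrictScalars A
  exact IsLocalization.isLocalization_of_algEquiv a.primeCompl
    (localizationEquiv.trans residueFieldEquiv)

end FieldStalk

section TorsionFreeQuotient

variable {A V : Type*} [CommRing A] [AddCommGroup V] [Module A V]

/-- The natural map from `V` to the maximal `A/a`-torsion-free quotient of `V/aV`, for use as a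
component of the map in condition (3). It is bundled as an `A`-linear map so that injectivity of
a product of such maps can be read off from their kernels. -/
def torsionFreeQuotientMk (a : Ideal A) :
    V →ₗ[A] (V ⧸ a • (⊤ : Submodule A V)) ⧸
      Submodule.torsion (A ⧸ a) (V ⧸ a • (⊤ : Submodule A V)) :=
  (Submodule.mkQ _).restrictScalars A ∘ₗ (a • (⊤ : Submodule A V)).mkQ

theorem ker_torsionFreeQuotientMk {a : Ideal A} [a.IsPrime]
    (ha : a ≤ Submodule.torsion' A A a.primeCompl) :
    LinearMap.ker (torsionFreeQuotientMk (V := V) a) = Submodule.torsion' A V a.primeCompl := by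
  rw [torsionFreeQuotientMk, LinearMap.ker_comp, LinearMap.ker_restrictScalars, Submodule.ker_mkQ,
    restrictScalars_torsion_quotient_eq_torsion', comap_mkQ_torsion' (smul_top_le_torsion' ha)]

end TorsionFreeQuotient

/-- The hypothesis `hA` is generic reducedness; it holds for instance in `k[x, y]/(x², xy)`. -/
theorem torsion_free_tfae_general (A : Type*) [CommRing A] [IsNoetherianRing A]
    (V : Type*) [AddCommGroup V] [Module A V]
    (hA : ∀ (a : Ideal A) [a.IsPrime], a ∈ minimalPrimes A → IsReduced (Localization.AtPrime a)) :
    List.TFAE [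
      associatedPrimes A V ⊆ minimalPrimes A,
      Function.Injective (LinearMap.pi fun a : minimalPrimes A =>
        TensorProduct.mk A (FractionRing (A ⧸ a.1)) V 1),
      Function.Injective (LinearMap.pi fun a : minimalPrimes A =>
        torsionFreeQuotientMk (V := V) a.1)] := by
  have isField (a : minimalPrimes A) : IsField (Localization.AtPrime a.1) :=
    have := hA a.1 a.2
    isField_localization_of_mem_minimalPrimes a.2
  have ker_mk (a : minimalPrimes A) :
      LinearMap.ker (TensorProduct.mk A (FractionRing (A ⧸ a.1)) V 1) =
        Submodule.torsion' A V a.1.primeCompl :=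
    have := isLocalization_atPrime_of_isFractionRing_quotient (isField a) (FractionRing (A ⧸ a.1))
    ker_eq_torsion'_of_isLocalizedModule _ _
  have ker_torsionFree (a : minimalPrimes A) :
      LinearMap.ker (torsionFreeQuotientMk (V := V) a.1) =
        Submodule.torsion' A V a.1.primeCompl :=
    ker_torsionFreeQuotientMk (le_torsion'_primeCompl_of_isField (isField a))
  simp only [← LinearMap.ker_eq_bot, LinearMap.ker_pi, ker_mk, ker_torsionFree,
    iInf_torsion'_minimalPrimes_eq_bot_iff]
  tfae_finish

/-- Let `A` be a reduced commutative Noetherian ring and `V` an `A`-module.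
The following are equivalent: (1) every associated prime of `V` is a minimal prime of `A`;
(2) the natural map `V → V ⊗_A K(A)` is injective, where `K(A)` is the product of the
residue fields `κ(a) = Frac(A/a)` of the minimal primes `a` of `A` (expressed here as the
injectivity of the diagonal map `v ↦ (v ⊗ 1)_a` into the product of the `V ⊗_A κ(a)`);
(3) the natural map from `V` to the product over minimal primes `a` of the maximal
`A/a`-torsion-free quotients of `V/aV` is injective. -/
theorem torsion_free_tfae
    (A : Type*) [CommRing A] [IsNoetherianRing A] [IsReduced A]
    (V : Type*) [AddCommGroup V] [Module A V] :
    List.TFAE [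
      (∀ p ∈ associatedPrimes A V, p ∈ minimalPrimes A),
      Function.Injective (fun (v : V) (a : {p : Ideal A // p ∈ minimalPrimes A}) =>
        letI : a.1.IsPrime := a.2.1.1
        letI : Algebra A (FractionRing (A ⧸ a.1)) :=
          ((algebraMap (A ⧸ a.1) (FractionRing (A ⧸ a.1))).comp
            (Ideal.Quotient.mk a.1)).toAlgebra
        ((1 : FractionRing (A ⧸ a.1)) ⊗ₜ[A] v : FractionRing (A ⧸ a.1) ⊗[A] V)),
      Function.Injective (fun (v : V) (a : {p : Ideal A // p ∈ minimalPrimes A}) =>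
        (Submodule.Quotient.mk
            (Submodule.Quotient.mk v :
              V ⧸ (a.1 • (⊤ : Submodule A V))) :
          (V ⧸ (a.1 • (⊤ : Submodule A V))) ⧸
            Submodule.torsion (A ⧸ a.1) (V ⧸ (a.1 • (⊤ : Submodule A V)))))] :=
  torsion_free_tfae_general A V fun _ _ _ => inferInstance
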